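/- For every z ∈ W_{H*} satisfying b⁻¹z*b = z⁻¹, the element bz lies in I_* and φ(bz) = φ'(z) + φ(b). -/

import Mathlib

set_option synthInstance.maxHeartbeats 1000000
set_option maxHeartbeats 2000000

open scoped Classical

noncomputable section

namespace LY

/-! ## The coefficient field `ℚ(q)` -/

/-- The field `ℚ(q)` of rational functions. -/
abbrev K : Type := RatFunc ℚ

/-- The indeterminate `q`. -/
def qK : K := RatFunc.X

/-- The inclusion `ℤ[q] → ℚ(q)`. -/
def toK (p : Polynomial ℤ) : K := algebraMap (Polynomial ℚ) K (p.map (Int.castRingHom ℚ))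

/-- Evaluation of `p ∈ ℤ[q]` at `−q`, as an element of `ℚ(q)`; i.e. `p(−q)`. -/
def atNegQ (p : Polynomial ℤ) : K := Polynomial.eval₂ (Int.castRingHom K) (-qK) p

/-- The standard basis element `T_w` (resp. `a_w`) of the function model `W → ℚ(q)`
of the Hecke algebra (resp. of the Lusztig–Vogan module `M`). -/
def TT {W : Type} (w : W) : W → K := fun y => if y = w then 1 else 0

variable {B W : Type} [Group W] {M : CoxeterMatrix B}

/-- The Bruhat order on a Coxeter group: `u ≤ v` iff `v` is obtained from `u` by successive
right multiplications by reflections, each increasing the length. -/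
def BruhatLE (cs : CoxeterSystem M W) (u v : W) : Prop :=
  Relation.ReflTransGen
    (fun a b => cs.length a < cs.length b ∧ ∃ t, cs.IsReflection t ∧ b = a * t) u v

/-- Connectedness of the Coxeter diagram of `M`. -/
def DiagramConnected (M : CoxeterMatrix B) : Prop :=
  ∀ i j : B, Relation.ReflTransGen (fun a b => a ≠ b ∧ M a b ≠ 2) i j

/-- An automorphism of `W` preserving the set `S` of simple reflections, i.e. an element
of `A = Aut(W,S)`. -/
def IsDiagAut (cs : CoxeterSystem M W) (a : MulAut W) : Prop :=
  (⇑a) '' (Set.range cs.simple) = Set.range cs.simple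

/-! ## The affine setting -/

/-- All the data and axioms describing the setting: `(W,S)` is the Coxeter group of an
untwisted connected affine Dynkin diagram (an irreducible affine Weyl group); `Λ` is the
subgroup of translations (elements with finite conjugacy class), free abelian of finite
rank and of finite index; `s₀` is a hyperspecial vertex, `J = S − {s₀}`, `W_J` is the
finite subgroup generated by `J` with longest element `w_J`; `*` is the involution of `W`
given by `w* = w_J w w_J` on `W_J` and `λ* = −(ʷᴶλ)` on `Λ`; `pr` is the projection
`W → W_J` along `Λ`; `ρ` is the conjugation action of `W` on `Λ_ℚ ≅ ℚ^rank`
(via the identification `freeIso` of `Λ` with `ℤ^rank`). -/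
structure AffineData (cs : CoxeterSystem M W) where
  finB : Finite B
  conn : DiagramConnected M
  infW : Infinite W
  /-- the subgroup `Λ` of translations -/
  Lam : Subgroup W
  hLam_mem : ∀ w : W, w ∈ Lam ↔ {x : W | IsConj w x}.Finite
  hLam_normal : Lam.Normal
  hLam_comm : ∀ a ∈ Lam, ∀ b ∈ Lam, a * b = b * a
  hLam_index : Lam.FiniteIndex
  /-- `Λ` is free abelian of finite rank -/
  rank : ℕ
  freeIso : Lam ≃* Multiplicative (Fin rank → ℤ)
  /-- the hyperspecial vertex `s₀` -/
  s0 : W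
  hs0_S : s0 ∈ Set.range cs.simple
  /-- `s₀` is hyperspecial: the projection `W → W/Λ` restricts to an isomorphism from the
  subgroup generated by `S − {s₀}` onto `W/Λ`. -/
  hs0_hyper : ∀ w : W, ∃! u : W,
    u ∈ Subgroup.closure (Set.range cs.simple \ {s0}) ∧ w * u⁻¹ ∈ Lam
  hWJ_fin : (Subgroup.closure (Set.range cs.simple \ {s0}) : Set W).Finite
  /-- the longest element `w_J` of `W_J` -/
  wJ : W
  hwJ_mem : wJ ∈ Subgroup.closure (Set.range cs.simple \ {s0})
  hwJ_max : ∀ u ∈ Subgroup.closure (Set.range cs.simple \ {s0}), cs.length u ≤ cs.length wJ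
  /-- the involution `*` of `W` -/
  st : MulAut W
  hst_inv : ∀ w : W, st (st w) = w
  hst_J : ∀ u ∈ Subgroup.closure (Set.range cs.simple \ {s0}), st u = wJ * u * wJ
  hst_Lam : ∀ l ∈ Lam, st l = (wJ * l * wJ⁻¹)⁻¹
  hst_S : ∀ s ∈ Set.range cs.simple, st s ∈ Set.range cs.simple
  /-- lower Bruhat intervals are finite -/
  hBruhat_fin : ∀ w : W, {y : W | BruhatLE cs y w}.Finite
  /-- the projection `W → W_J` along `Λ` (`w ↦ w̄`) -/
  pr : W → W
  hpr : ∀ w : W, pr w ∈ Subgroup.closure (Set.range cs.simple \ {s0}) ∧ w * (pr w)⁻¹ ∈ Lam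
  /-- the conjugation action of `W` on `Λ_ℚ ≅ ℚ^rank` -/
  rho : W → ((Fin rank → ℚ) →ₗ[ℚ] (Fin rank → ℚ))
  hrho : ∀ (w : W) (l : Lam),
    rho w (fun i => ((Multiplicative.toAdd (freeIso l)) i : ℚ)) =
      fun i => ((Multiplicative.toAdd
        (freeIso ⟨w * (l : W) * w⁻¹, hLam_normal.conj_mem _ l.2 w⟩)) i : ℚ)

namespace AffineData

variable {cs : CoxeterSystem M W} (D : AffineData cs)

/-- The set `J = S − {s₀}`. -/
def Jset : Set W := Set.range cs.simple \ {D.s0}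

/-- The finite Weyl group `W_J`. -/
def WJ : Subgroup W := Subgroup.closure D.Jset

/-- `λ ∈ Λ` is a dominant translation (`λ ∈ Λ⁺`). -/
def IsDominant (l : W) : Prop :=
  l ∈ D.Lam ∧ cs.length (l * D.wJ) = cs.length l + cs.length D.wJ

/-- The embedding `Λ → Λ_ℚ = ℚ^rank`. -/
def iota (l : D.Lam) : Fin D.rank → ℚ :=
  fun i => ((Multiplicative.toAdd (D.freeIso l)) i : ℚ)

/-- `e(A)`: the dimension of the `(−1)`-eigenspace of a linear endomorphism `A` of `Λ_ℚ`. -/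
def eNeg (f : (Fin D.rank → ℚ) →ₗ[ℚ] (Fin D.rank → ℚ)) : ℕ :=
  Module.finrank ℚ (Module.End.eigenspace (f : Module.End ℚ (Fin D.rank → ℚ)) (-1))

/-- The map `A_u : λ ↦ ᵘ(λ*) = −(ᵘʷᴶλ)` on `Λ_ℚ`, for `u ∈ W_J`. -/
def Amap (u : W) : (Fin D.rank → ℚ) →ₗ[ℚ] (Fin D.rank → ℚ) := - D.rho (u * D.wJ)

/-- The invariant `φ(w) = e(A_{w̄}) − e(A_e)` for `w ∈ I_*`. -/
def phi (w : W) : ℤ := (D.eNeg (D.Amap (D.pr w)) : ℤ) - (D.eNeg (D.Amap 1) : ℤ)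

/-- The double coset `W_J x W_J`. -/
def DCoset (x : W) : Set W := {y : W | ∃ u ∈ D.WJ, ∃ v ∈ D.WJ, y = u * x * v}

/-- The set `H = J ∩ bJb⁻¹`. -/
def Hset (b : W) : Set W := D.Jset ∩ ((fun s => b * s * b⁻¹) '' D.Jset)

/-- The set `H* ⊆ J`, image of `H` under `*`. -/
def Hstar (b : W) : Set W := (⇑D.st) '' D.Hset b

/-- The subgroup `W_{H*}` generated by `H*`. -/
def WHstar (b : W) : Subgroup W := Subgroup.closure (D.Hstar b)

/-- The reflection representation `R'` of `W_{H*}`, as a subspace of `Λ_ℚ`: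
the span of the vectors `λ − ˢλ` for `λ ∈ Λ`, `s ∈ H*`. -/
def Rprime (b : W) : Submodule ℚ (Fin D.rank → ℚ) :=
  Submodule.span ℚ
    {v : Fin D.rank → ℚ | ∃ l : D.Lam, ∃ s ∈ D.Hstar b,
      v = D.iota l - D.iota ⟨s * (l : W) * s⁻¹, D.hLam_normal.conj_mem _ l.2 s⟩}

/-- `e'(A)`: the dimension of the `(−1)`-eigenspace of an endomorphism `A` of `R'`. -/
def eNeg' {b : W} (f : ↥(D.Rprime b) →ₗ[ℚ] ↥(D.Rprime b)) : ℕ :=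
  Module.finrank ℚ (Module.End.eigenspace (f : Module.End ℚ ↥(D.Rprime b)) (-1))

/-- `φ'(z) = e'(B_z) − e'(B_e)`, where `B_u : x ↦ −u·(w_{H*}·x)` on `R'`; here
`rho'` is the conjugation action of `W_{H*}` on `R'` and `wHs` is the longest element
of `W_{H*}`. -/
def phiP {b : W} (rho' : W → (↥(D.Rprime b) →ₗ[ℚ] ↥(D.Rprime b))) (wHs z : W) : ℤ :=
  (D.eNeg' (-(rho' (z * wHs))) : ℤ) - (D.eNeg' (-(rho' wHs)) : ℤ)

/-- Membership in `A_Λ ⊆ A = Aut(W,S)`: automorphisms acting on `Λ` as conjugation by some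
element of `W_J`. -/
def InALam (a : MulAut W) : Prop :=
  IsDiagAut cs a ∧ ∃ w ∈ D.WJ, ∀ l ∈ D.Lam, a l = w * l * w⁻¹

/-- Membership in the coset `A_Λ* = {a ∘ * : a ∈ A_Λ}`. -/
def InALamStar (c : MulAut W) : Prop := ∃ a : MulAut W, D.InALam a ∧ c = a * D.st

/-- The double coset `W_J x W_J^◇`, where `W_J^◇` is the subgroup generated by
`J^◇ = S − {s₁}`. -/
def DCosetDia (s1 : W) (x : W) : Set W :=
  {y : W | ∃ u ∈ D.WJ, ∃ v ∈ Subgroup.closure (Set.range cs.simple \ {s1}), y = u * x * v}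


end AffineData

/-! ## The Hecke algebra, the Lusztig–Vogan module, and the polynomials `P`, `P^σ` -/

/-- The Hecke algebra of `(W,S)` over `ℚ(q)` (modelled on functions `W → ℚ(q)`, with basis
`TT w = T_w`), together with its bar involution, and the Kazhdan–Lusztig polynomials
`P_{y,w} ∈ ℤ[q]` characterized by their defining properties. -/
structure HeckeData (cs : CoxeterSystem M W) where
  /-- the involution `q ↦ q⁻¹` of `ℚ(q)` -/
  barK : K →+* K
  hbarK_X : barK qK = qK⁻¹
  hbarK_inv : ∀ x, barK (barK x) = x
  /-- the multiplication of the Hecke algebra -/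
  mulH : (W → K) →ₗ[K] (W → K) →ₗ[K] (W → K)
  hmul_assoc : ∀ x y z : W → K, mulH (mulH x y) z = mulH x (mulH y z)
  hmul_one : ∀ x : W → K, mulH (TT 1) x = x ∧ mulH x (TT 1) = x
  hmul_TT : ∀ u v : W, cs.length (u * v) = cs.length u + cs.length v →
    mulH (TT u) (TT v) = TT (u * v)
  hmul_Ts : ∀ s ∈ Set.range cs.simple,
    mulH (TT s) (TT s) = (qK - 1) • TT s + qK • TT (1 : W)
  /-- the bar involution of the Hecke algebra: the ring involution with `q ↦ q⁻¹`,
  `T_w ↦ (T_{w⁻¹})⁻¹` -/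
  barH : (W → K) →+ (W → K)
  hbarH_inv : ∀ x, barH (barH x) = x
  hbarH_smul : ∀ (c : K) (x : W → K), barH (c • x) = barK c • barH x
  hbarH_mul : ∀ x y : W → K, barH (mulH x y) = mulH (barH x) (barH y)
  hbarH_T : ∀ w : W, mulH (barH (TT w)) (TT w⁻¹) = TT (1 : W) ∧
    mulH (TT w⁻¹) (barH (TT w)) = TT (1 : W)
  /-- the Kazhdan–Lusztig polynomials `P_{y,w}` -/
  P : W → W → Polynomial ℤ
  hP_supp : ∀ y w : W, ¬ BruhatLE cs y w → P y w = 0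
  hP_diag : ∀ w : W, P w w = 1
  hP_deg : ∀ y w : W, BruhatLE cs y w → y ≠ w →
    2 * (P y w).natDegree + 1 ≤ cs.length w - cs.length y
  hP_dual : ∀ w : W,
    (qK ^ cs.length w) • barH (fun y => if BruhatLE cs y w then toK (P y w) else 0)
      = fun y => if BruhatLE cs y w then toK (P y w) else 0

/-- The Lusztig–Vogan module `M` over the Hecke algebra `H'` with parameter `q²`, attached to
a length-preserving involutive automorphism `star` of `(W,S)`, together with its bar
involution, and the polynomials `P^σ_{y,w} ∈ ℤ[q]` (for `y, w ∈ I_*`) characterized by their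
defining properties.  Both `H'` and `M` are modelled on functions `W → ℚ(q)`; the basis
element `a_w` of `M` (for `w ∈ I_*`) is `TT w`. -/
structure LVData (cs : CoxeterSystem M W) (star : MulAut W) where
  /-- the involution `q ↦ q⁻¹` of `ℚ(q)` -/
  barK : K →+* K
  hbarK_X : barK qK = qK⁻¹
  hbarK_inv : ∀ x, barK (barK x) = x
  /-- the multiplication of the Hecke algebra `H'` with parameter `q²` -/
  mulH' : (W → K) →ₗ[K] (W → K) →ₗ[K] (W → K)
  hmul'_assoc : ∀ x y z : W → K, mulH' (mulH' x y) z = mulH' x (mulH' y z)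
  hmul'_one : ∀ x : W → K, mulH' (TT 1) x = x ∧ mulH' x (TT 1) = x
  hmul'_TT : ∀ u v : W, cs.length (u * v) = cs.length u + cs.length v →
    mulH' (TT u) (TT v) = TT (u * v)
  hmul'_Ts : ∀ s ∈ Set.range cs.simple,
    mulH' (TT s) (TT s) = (qK ^ 2 - 1) • TT s + (qK ^ 2) • TT (1 : W)
  /-- the bar involution of `H'` -/
  barH' : (W → K) →+ (W → K)
  hbarH'_inv : ∀ x, barH' (barH' x) = x
  hbarH'_smul : ∀ (c : K) (x : W → K), barH' (c • x) = barK c • barH' x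
  hbarH'_mul : ∀ x y : W → K, barH' (mulH' x y) = mulH' (barH' x) (barH' y)
  hbarH'_T : ∀ w : W, mulH' (barH' (TT w)) (TT w⁻¹) = TT (1 : W) ∧
    mulH' (TT w⁻¹) (barH' (TT w)) = TT (1 : W)
  /-- the action of `H'` on the module `M` -/
  actM : (W → K) →ₗ[K] (W → K) →ₗ[K] (W → K)
  hact_one : ∀ m : W → K, actM (TT 1) m = m
  hact_mul : ∀ (h h' : W → K) (m : W → K), actM (mulH' h h') m = actM h (actM h' m)
  hact1 : ∀ s ∈ Set.range cs.simple, ∀ w : W, star w = w⁻¹ →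
    s * w = w * star s → cs.length w < cs.length (s * w) →
    actM (TT s) (TT w) = qK • TT w + (qK + 1) • TT (s * w)
  hact2 : ∀ s ∈ Set.range cs.simple, ∀ w : W, star w = w⁻¹ →
    s * w = w * star s → cs.length (s * w) < cs.length w →
    actM (TT s) (TT w) = (qK ^ 2 - qK - 1) • TT w + (qK ^ 2 - qK) • TT (s * w)
  hact3 : ∀ s ∈ Set.range cs.simple, ∀ w : W, star w = w⁻¹ →
    s * w ≠ w * star s → cs.length w < cs.length (s * w) →
    actM (TT s) (TT w) = TT (s * w * star s)
  hact4 : ∀ s ∈ Set.range cs.simple, ∀ w : W, star w = w⁻¹ →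
    s * w ≠ w * star s → cs.length (s * w) < cs.length w →
    actM (TT s) (TT w) = (qK ^ 2 - 1) • TT w + (qK ^ 2) • TT (s * w * star s)
  /-- the bar involution of the module `M` -/
  barM : (W → K) →+ (W → K)
  hbarM_inv : ∀ m : W → K, barM (barM m) = m
  hbarM_smul : ∀ (c : K) (m : W → K), barM (c • m) = barK c • barM m
  hbarM_act : ∀ (h m : W → K), barM (actM h m) = actM (barH' h) (barM m)
  hbarM_one : barM (TT 1) = TT (1 : W)
  /-- the Lusztig–Vogan polynomials `P^σ_{y,w}` -/
  Psig : W → W → Polynomial ℤ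
  hPsig_supp : ∀ y w : W, ¬ (BruhatLE cs y w ∧ star y = y⁻¹) → Psig y w = 0
  hPsig_diag : ∀ w : W, star w = w⁻¹ → Psig w w = 1
  hPsig_deg : ∀ y w : W, star w = w⁻¹ → star y = y⁻¹ → BruhatLE cs y w → y ≠ w →
    2 * (Psig y w).natDegree + 1 ≤ cs.length w - cs.length y
  hPsig_dual : ∀ w : W, star w = w⁻¹ →
    (qK ^ (2 * cs.length w)) •
        barM (fun y => if BruhatLE cs y w ∧ star y = y⁻¹ then toK (Psig y w) else 0)
      = fun y => if BruhatLE cs y w ∧ star y = y⁻¹ then toK (Psig y w) else 0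

/-! ## The `Z`-polynomials -/

/-- `Z_w(q) = Σ_{y ≤ w} P_{y,w}(q) q^{ℓ(y)}`. -/
def Zpoly (cs : CoxeterSystem M W) (HD : HeckeData cs) (w : W) : K :=
  ∑ᶠ y : W, if BruhatLE cs y w then toK (HD.P y w) * qK ^ cs.length y else 0

/-- `Z_w(−q) = Σ_{y ≤ w} P_{y,w}(−q) (−q)^{ℓ(y)}`. -/
def ZpolyNeg (cs : CoxeterSystem M W) (HD : HeckeData cs) (w : W) : K :=
  ∑ᶠ y : W, if BruhatLE cs y w then atNegQ (HD.P y w) * (-qK) ^ cs.length y else 0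

/-- `Z^σ_w(q) = Σ_{y ≤ w, y ∈ I_*} P^σ_{y,w}(q) q^{ℓ(y)} ((q−1)/(q+1))^{φ(y)}`. -/
def Zsig (cs : CoxeterSystem M W) (D : AffineData cs) (LD : LVData cs D.st) (w : W) : K :=
  ∑ᶠ y : W, if BruhatLE cs y w ∧ D.st y = y⁻¹ then
    toK (LD.Psig y w) * qK ^ cs.length y * ((qK - 1) / (qK + 1)) ^ D.phi y else 0

/-!
A dominant `μ` is shortest in `μW_J`, so `μ = ub` with `u ∈ W_J`. Applying `*` to this equation
shows `w_J⁻¹u ∈ W_J ∩ bW_Jb⁻¹ = W_H`, and comparing lengths forces `u⁻¹w_J` to be the longest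
element of `W_H`; equivalently `b = w_J w_{H*} μ`. Modulo `Λ`, which acts trivially on `Λ_ℚ`, the
element `b z w_J` is therefore conjugate to `z w_{H*}`. Since `Λ_ℚ` is the direct sum of `R'` and
the `W_{H*}`-invariants, the spaces fixed by an element of `W_{H*}` on `Λ_ℚ` and on `R'` have
dimensions that differ by a constant, which cancels in `φ'`.

The facts on coset representatives rest on the strong exchange condition, obtained from the action
of `W` on pairs (element, sign), whose sign component counts inversions modulo two.
-/

section ReflectionCocycle

open CoxeterSystem

variable {B W : Type*} [Group W] {M : CoxeterMatrix B} (cs : CoxeterSystem M W)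

theorem prod_map_reverse_alternatingWord {N : Type*} [Monoid N] (f : B → N) (i j : B) (m : ℕ) :
    ((alternatingWord i j (2 * m)).reverse.map f).prod = (f j * f i) ^ m := by
  induction m with
  | zero => simp [alternatingWord]
  | succ m ih =>
    rw [Nat.mul_succ, alternatingWord_succ', alternatingWord_succ']
    simp only [Nat.even_add_one, even_two_mul, not_true, if_true, if_false, List.reverse_cons,
      List.map_append, List.prod_append, ih, List.map_cons, List.map_nil, List.prod_singleton,
      pow_succ, mul_assoc]

theorem leftInvSeq_alternatingWord_eq_map_range (i j : B) (m : ℕ) :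
    cs.leftInvSeq (alternatingWord i j (2 * m)) =
      (List.range (2 * m)).map fun k => cs.simple i * (cs.simple j * cs.simple i) ^ k := by
  refine List.ext_getElem (by simp) fun k hk _ => ?_
  have hk' : k < 2 * m := by simpa using hk
  rw [cs.getElem_leftInvSeq_alternatingWord i j m k hk', cs.prod_alternatingWord_eq_mul_pow]
  simp [show (2 * k + 1) / 2 = k by omega]

theorem count_leftInvSeq_alternatingWord_braid (i j : B) (t : W) :
    ((cs.leftInvSeq (alternatingWord i j (2 * M i j))).count t : ZMod 2) = 0 := by
  rw [leftInvSeq_alternatingWord_eq_map_range, two_mul, List.range_add, List.map_append,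
    List.count_append, List.map_map]
  simp only [Function.comp_def, pow_add, cs.simple_mul_simple_pow', one_mul]
  rw [Nat.cast_add, CharTwo.add_self_eq_zero]

/-- The action of the generator `sᵢ` on pairs (element, sign): it conjugates the element, and flips
the sign exactly when that element is `sᵢ`. The sign is written additively. -/
def reflectionStep (i : B) : Function.End (W × ZMod 2) :=
  fun p => (cs.simple i * p.1 * cs.simple i, p.2 + if p.1 = cs.simple i then 1 else 0)

theorem prod_map_reflectionStep (ω : List B) (p : W × ZMod 2) :
    (ω.map (reflectionStep cs)).prod p =
      (cs.wordProd ω * p.1 * (cs.wordProd ω)⁻¹, p.2 + (cs.rightInvSeq ω).count p.1) := by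
  induction ω with
  | nil => simp [Function.End.one_def]
  | cons i ω ih =>
    have hconj : cs.wordProd ω * (p.1 * (cs.wordProd ω)⁻¹) = cs.simple i ↔
        (cs.wordProd ω)⁻¹ * (cs.simple i * cs.wordProd ω) = p.1 := by
      rw [inv_mul_eq_iff_eq_mul, ← mul_assoc, mul_inv_eq_iff_eq_mul, eq_comm]
    rw [List.map_cons, List.prod_cons]
    change reflectionStep cs i ((ω.map (reflectionStep cs)).prod p) = _
    rw [ih]
    simp [reflectionStep, rightInvSeq, List.count_cons, wordProd_cons, hconj, mul_assoc, add_assoc]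

theorem isLiftable_reflectionStep : M.IsLiftable (reflectionStep cs) := by
  intro i j
  funext p
  rw [← prod_map_reverse_alternatingWord, prod_map_reflectionStep, rightInvSeq_reverse,
    List.count_reverse, M.symmetric, count_leftInvSeq_alternatingWord_braid]
  have hprod : cs.wordProd (alternatingWord j i (2 * M j i)).reverse = 1 := by
    rw [wordProd, prod_map_reverse_alternatingWord, cs.simple_mul_simple_pow']
  simp [hprod, Function.End.one_def]

/-- The action of `W` on pairs (element, sign) by the steps `reflectionStep`. -/
def reflectionAction : W →* Function.End (W × ZMod 2) :=
  cs.lift ⟨reflectionStep cs, isLiftable_reflectionStep cs⟩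

theorem reflectionAction_wordProd (ω : List B) :
    reflectionAction cs (cs.wordProd ω) = (ω.map (reflectionStep cs)).prod := by
  rw [wordProd, map_list_prod, List.map_map]
  congr 2
  funext i
  exact cs.lift_apply_simple _ i

/-- The reflection cocycle: the parity of the number of occurrences of `t` in the right inversion
sequence of any word for `w`. -/
def inversionParity (w t : W) : ZMod 2 := (reflectionAction cs w (t, 0)).2

theorem inversionParity_wordProd (ω : List B) (t : W) :
    inversionParity cs (cs.wordProd ω) t = (cs.rightInvSeq ω).count t := by
  rw [inversionParity, reflectionAction_wordProd, prod_map_reflectionStep, zero_add]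

theorem reflectionAction_apply (w : W) (p : W × ZMod 2) :
    reflectionAction cs w p = (w * p.1 * w⁻¹, p.2 + inversionParity cs w p.1) := by
  obtain ⟨ω, rfl⟩ := cs.wordProd_surjective w
  rw [reflectionAction_wordProd, prod_map_reflectionStep, inversionParity_wordProd]

theorem inversionParity_mul (x y t : W) :
    inversionParity cs (x * y) t =
      inversionParity cs y t + inversionParity cs x (y * t * y⁻¹) := by
  rw [inversionParity, map_mul]
  change (reflectionAction cs x (reflectionAction cs y (t, 0))).2 = _
  rw [reflectionAction_apply, reflectionAction_apply, zero_add]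

variable {cs}

theorem inversionParity_self {t : W} (ht : cs.IsReflection t) : inversionParity cs t t = 1 := by
  obtain ⟨w, i, rfl⟩ := ht
  have hsimple : inversionParity cs (cs.simple i) (cs.simple i) = 1 := by
    simpa [rightInvSeq] using inversionParity_wordProd cs [i] (cs.simple i)
  have hcancel : inversionParity cs w⁻¹ (w * cs.simple i * w⁻¹) +
      inversionParity cs w (cs.simple i) = 0 := by
    have h := inversionParity_mul cs w w⁻¹ (w * cs.simple i * w⁻¹)
    rw [mul_inv_cancel] at h
    simpa [mul_assoc, inversionParity_wordProd cs []] using h.symm.trans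
      (inversionParity_wordProd cs [] (w * cs.simple i * w⁻¹))
  have hconj : w⁻¹ * (w * cs.simple i * w⁻¹) * w⁻¹⁻¹ = cs.simple i := by group
  rw [inversionParity_mul, inversionParity_mul, hconj, hsimple, cs.inv_simple,
    cs.simple_mul_simple_self, one_mul]
  linear_combination hcancel

theorem mem_rightInvSeq_of_inversionParity_ne_zero {ω : List B} {t : W}
    (h : inversionParity cs (cs.wordProd ω) t ≠ 0) : t ∈ cs.rightInvSeq ω := by
  contrapose! h
  rw [inversionParity_wordProd, List.count_eq_zero_of_not_mem h, Nat.cast_zero]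

theorem isRightInversion_of_inversionParity_ne_zero {w t : W} (h : inversionParity cs w t ≠ 0) :
    cs.IsRightInversion w t := by
  obtain ⟨ω, hω, rfl⟩ := cs.exists_isReduced w
  exact cs.isRightInversion_of_mem_rightInvSeq hω (mem_rightInvSeq_of_inversionParity_ne_zero h)

theorem isRightInversion_iff_inversionParity_ne_zero {w t : W} :
    cs.IsRightInversion w t ↔ inversionParity cs w t ≠ 0 := by
  refine ⟨fun h h0 => ?_, isRightInversion_of_inversionParity_ne_zero⟩
  have hwt : inversionParity cs (w * t) t ≠ 0 := by
    rw [inversionParity_mul, inversionParity_self h.1, mul_inv_cancel_right, h0]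
    simp
  exact h.1.isRightInversion_mul_left_iff.1 (isRightInversion_of_inversionParity_ne_zero hwt) h

theorem mem_rightInvSeq_of_isRightInversion {ω : List B} {t : W}
    (h : cs.IsRightInversion (cs.wordProd ω) t) : t ∈ cs.rightInvSeq ω :=
  mem_rightInvSeq_of_inversionParity_ne_zero (isRightInversion_iff_inversionParity_ne_zero.1 h)

theorem isRightInversion_mul_iff {x y t : W} :
    cs.IsRightInversion (x * y) t ↔
      Xor (cs.IsRightInversion y t) (cs.IsRightInversion x (y * t * y⁻¹)) := by
  simp only [isRightInversion_iff_inversionParity_ne_zero, inversionParity_mul, Xor]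
  generalize inversionParity cs y t = a
  generalize inversionParity cs x (y * t * y⁻¹) = c
  revert a c
  decide

end ReflectionCocycle

section Parabolic

open CoxeterSystem Subgroup

variable {B W : Type*} [Group W] {M : CoxeterMatrix B} {cs : CoxeterSystem M W}
variable {X Y : Set W}

theorem isReflection_of_mem_range_simple {s : W} (hs : s ∈ Set.range cs.simple) :
    cs.IsReflection s := by
  obtain ⟨i, rfl⟩ := hs
  exact cs.isReflection_simple i

theorem exists_isReduced_of_mem_closure (hX : X ⊆ Set.range cs.simple) {u : W}
    (hu : u ∈ closure X) :
    ∃ ω, cs.IsReduced ω ∧ (∀ i ∈ ω, cs.simple i ∈ X) ∧ u = cs.wordProd ω := by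
  have extend : ∀ x, ∀ s ∈ X,
      (∃ ω, cs.IsReduced ω ∧ (∀ i ∈ ω, cs.simple i ∈ X) ∧ x = cs.wordProd ω) →
      ∃ ω, cs.IsReduced ω ∧ (∀ i ∈ ω, cs.simple i ∈ X) ∧ x * s = cs.wordProd ω := by
    rintro _ s hs ⟨ω, hω, hωX, rfl⟩
    obtain ⟨i, rfl⟩ := hX hs
    rcases cs.length_mul_simple (cs.wordProd ω) i with hlt | hgt
    · refine ⟨ω.concat i, ?_, ?_, (cs.wordProd_concat i ω).symm⟩
      · rw [CoxeterSystem.IsReduced, wordProd_concat, hlt, hω.eq, List.length_concat]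
      · simpa [List.concat_eq_append, or_imp, forall_and] using ⟨hωX, hs⟩
    · have hinv : cs.IsRightInversion (cs.wordProd ω) (cs.simple i) :=
        ⟨cs.isReflection_simple i, by omega⟩
      obtain ⟨j, hj, hji⟩ := List.getElem_of_mem (mem_rightInvSeq_of_isRightInversion hinv)
      have herase : cs.wordProd ω * cs.simple i = cs.wordProd (ω.eraseIdx j) := by
        rw [← wordProd_mul_getD_rightInvSeq, List.getD_eq_getElem _ _ hj, hji]
      refine ⟨ω.eraseIdx j, ?_, fun k hk => hωX k (List.mem_of_mem_eraseIdx hk), herase⟩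
      have := List.length_eraseIdx_add_one (l := ω) (i := j) (by simpa using hj)
      rw [CoxeterSystem.IsReduced, ← herase]
      have := hω.eq
      omega
  induction hu using closure_induction_right with
  | one => exact ⟨[], by simp [CoxeterSystem.IsReduced], by simp, by simp⟩
  | mul_right x _ s hs ih => exact extend x s hs ih
  | mul_inv_cancel x _ s hs ih =>
    rw [(isReflection_of_mem_range_simple (hX hs)).inv]
    exact extend x s hs ih

@[elab_as_elim]
theorem parabolic_induction (hX : X ⊆ Set.range cs.simple) {P : (u : W) → u ∈ closure X → Prop}
    (one : P 1 (one_mem _))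
    (mul_right : ∀ u hu s (hs : s ∈ X), cs.length u < cs.length (u * s) → P u hu →
      P (u * s) (mul_mem hu (subset_closure hs)))
    {u : W} (hu : u ∈ closure X) : P u hu := by
  obtain ⟨ω, hω, hωX, rfl⟩ := exists_isReduced_of_mem_closure hX hu
  induction ω using List.reverseRecOn with
  | nil => simpa using one
  | append_singleton ω i ih =>
    have hω' : cs.IsReduced ω := by simpa using hω.take ω.length
    have hmem : ∀ j ∈ ω, cs.simple j ∈ X := fun j hj => hωX j (by simp [hj])
    have hprod : cs.wordProd ω ∈ closure X :=
      Subgroup.list_prod_mem _ (by simpa using fun j hj => subset_closure (hmem j hj))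
    have hlen := hω.eq
    simp only [wordProd_append, wordProd_singleton, List.length_append,
      List.length_singleton] at hlen ⊢
    exact mul_right _ hprod _ (hωX i (by simp)) (by rw [hlen, hω'.eq]; omega) (ih hω' hmem hprod)

theorem eq_of_isRightInversion_simple {i : B} {t : W} (ht : cs.IsRightInversion (cs.simple i) t) :
    t = cs.simple i := by
  rw [← wordProd_singleton] at ht
  simpa using mem_rightInvSeq_of_isRightInversion ht

theorem mem_closure_of_isRightInversion (hX : X ⊆ Set.range cs.simple) {u t : W}
    (hu : u ∈ closure X) (ht : cs.IsRightInversion u t) : t ∈ closure X := by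
  induction hu using parabolic_induction hX generalizing t with
  | one => simpa using ht.2
  | mul_right u _ s hs _ ih =>
    obtain ⟨i, rfl⟩ := hX hs
    rcases isRightInversion_mul_iff.1 ht with ⟨h, -⟩ | ⟨h, -⟩
    · exact eq_of_isRightInversion_simple h ▸ subset_closure hs
    · simpa only [mul_mem_cancel_right (inv_mem (subset_closure hs)),
        mul_mem_cancel_left (subset_closure hs)] using ih h

theorem mem_of_mem_closure_of_length_eq_one (hX : X ⊆ Set.range cs.simple) {u : W}
    (hu : u ∈ closure X) (hlen : cs.length u = 1) : u ∈ X := by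
  obtain ⟨ω, hω, hωX, rfl⟩ := exists_isReduced_of_mem_closure hX hu
  obtain ⟨i, rfl⟩ := List.length_eq_one_iff.1 (hω.eq.symm.trans hlen)
  simpa using hωX i (by simp)

variable (cs) in
/-- `x` has minimal length in its left coset `xG`. -/
def IsMinLeftCosetRep (G : Subgroup W) (x : W) : Prop :=
  ∀ u ∈ G, cs.length x ≤ cs.length (x * u)

variable (cs) in
/-- `b` has minimal length in its double coset `GbK`. -/
def IsMinDoubleCosetRep (G K : Subgroup W) (b : W) : Prop :=
  ∀ u ∈ G, ∀ v ∈ K, cs.length b ≤ cs.length (u * b * v)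

variable (cs) in
/-- `w` is an element of `G` of maximal length. -/
def IsLongestIn (G : Subgroup W) (w : W) : Prop :=
  w ∈ G ∧ ∀ u ∈ G, cs.length u ≤ cs.length w

theorem IsMinLeftCosetRep.length_mul (hX : X ⊆ Set.range cs.simple) {x u : W}
    (hx : IsMinLeftCosetRep cs (closure X) x) (hu : u ∈ closure X) :
    cs.length (x * u) = cs.length x + cs.length u := by
  induction hu using parabolic_induction hX with
  | one => simp
  | mul_right u hu s hs hlt ih =>
    have hasc : ¬ cs.IsRightInversion (x * u) s := by
      rw [isRightInversion_mul_iff]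
      rintro (⟨h, -⟩ | ⟨h, -⟩)
      · exact h.2.not_gt hlt
      · exact h.2.not_ge (hx _ (mul_mem (mul_mem hu (subset_closure hs)) (inv_mem hu)))
    obtain ⟨i, rfl⟩ := hX hs
    rw [cs.isRightInversion_simple_iff_isRightDescent, cs.not_isRightDescent_iff] at hasc
    have hui := cs.length_mul_simple u i
    rw [← mul_assoc]
    omega

theorem IsLongestIn.length_mul_add (hX : X ⊆ Set.range cs.simple) {w u : W}
    (hw : IsLongestIn cs (closure X) w) (hu : u ∈ closure X) :
    cs.length (w * u) + cs.length u = cs.length w := by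
  induction hu using parabolic_induction hX with
  | one => simp
  | mul_right u hu s hs hlt ih =>
    have hrefl := (isReflection_of_mem_range_simple (hX hs)).conj u
    have hdesc : cs.IsRightInversion (w * u) s := by
      refine isRightInversion_mul_iff.2 (Or.inr ⟨⟨hrefl, ?_⟩, fun h => h.2.not_gt hlt⟩)
      exact (hw.2 _ (mul_mem hw.1 (mul_mem (mul_mem hu (subset_closure hs))
        (inv_mem hu)))).lt_of_ne (hrefl.length_mul_left_ne w)
    obtain ⟨i, rfl⟩ := hX hs
    rw [cs.isRightInversion_simple_iff_isRightDescent, cs.isRightDescent_iff] at hdesc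
    have hui := cs.length_mul_simple u i
    rw [← mul_assoc]
    omega

theorem IsLongestIn.eq (hX : X ⊆ Set.range cs.simple) {w w' : W}
    (hw : IsLongestIn cs (closure X) w) (hw' : IsLongestIn cs (closure X) w') : w = w' := by
  have hlen := hw.length_mul_add hX (mul_mem (inv_mem hw.1) hw'.1)
  rw [mul_inv_cancel_left] at hlen
  have hge := hw'.2 w hw.1
  exact (inv_mul_eq_one.1 (cs.length_eq_zero_iff.1 (by omega)))

theorem IsLongestIn.inv {G : Subgroup W} {w : W} (hw : IsLongestIn cs G w) :
    IsLongestIn cs G w⁻¹ :=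
  ⟨inv_mem hw.1, fun u hu => (hw.2 u hu).trans_eq (cs.length_inv w).symm⟩

theorem IsLongestIn.map {G : Subgroup W} {w : W} (hw : IsLongestIn cs G w) {f : MulAut W}
    (hf : ∀ x, cs.length (f x) = cs.length x) :
    IsLongestIn cs (G.map f.toMonoidHom) (f w) := by
  refine ⟨mem_map_of_mem f.toMonoidHom hw.1, ?_⟩
  rintro _ ⟨u, hu, rfl⟩
  exact (hf u).trans_le ((hw.2 u hu).trans_eq (hf w).symm)

theorem IsMinDoubleCosetRep.isMinLeftCosetRep {G K : Subgroup W} {b : W}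
    (hb : IsMinDoubleCosetRep cs G K b) : IsMinLeftCosetRep cs K b :=
  fun v hv => by simpa using hb 1 (one_mem G) v hv

theorem IsMinDoubleCosetRep.inv {G K : Subgroup W} {b : W}
    (hb : IsMinDoubleCosetRep cs G K b) : IsMinDoubleCosetRep cs K G b⁻¹ := fun v hv u hu => by
  rw [← cs.length_inv (v * _ * u), cs.length_inv]
  simpa [mul_assoc] using hb u⁻¹ (inv_mem hu) v⁻¹ (inv_mem hv)

theorem IsMinDoubleCosetRep.length_mul_left (hX : X ⊆ Set.range cs.simple) {K : Subgroup W}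
    {b u : W} (hb : IsMinDoubleCosetRep cs (closure X) K b) (hu : u ∈ closure X) :
    cs.length (u * b) = cs.length u + cs.length b := by
  have h := hb.inv.isMinLeftCosetRep.length_mul hX (inv_mem hu)
  rwa [← mul_inv_rev, cs.length_inv, cs.length_inv, cs.length_inv, add_comm] at h

theorem IsMinDoubleCosetRep.conj_mem_of_isRightInversion (hX : X ⊆ Set.range cs.simple)
    (hY : Y ⊆ Set.range cs.simple) {b u s : W}
    (hb : IsMinDoubleCosetRep cs (closure X) (closure Y) b) (hu : u ∈ closure X) (hs : s ∈ Y)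
    (hinv : cs.IsRightInversion (u * b) s) : b * s * b⁻¹ ∈ X := by
  have hinv' : cs.IsRightInversion u (b * s * b⁻¹) := by
    rcases isRightInversion_mul_iff.1 hinv with ⟨h, -⟩ | ⟨h, -⟩
    · exact absurd h.2 (hb.isMinLeftCosetRep s (subset_closure hs)).not_gt
    · exact h
  have hmem := mem_closure_of_isRightInversion hX hu hinv'
  refine mem_of_mem_closure_of_length_eq_one hX hmem ?_
  have hlen := hb.length_mul_left hX hmem
  have hlen' := hb.isMinLeftCosetRep.length_mul hY (subset_closure hs)
  obtain ⟨i, rfl⟩ := hY hs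
  rw [inv_mul_cancel_right] at hlen
  rw [cs.length_simple] at hlen'
  omega

theorem IsMinDoubleCosetRep.conj_mem_and_mul_eq (hX : X ⊆ Set.range cs.simple)
    (hY : Y ⊆ Set.range cs.simple) {b x u v s : W}
    (hb : IsMinDoubleCosetRep cs (closure X) (closure Y) b)
    (hx : IsMinLeftCosetRep cs (closure Y) x) (hu : u ∈ closure X) (hv : v ∈ closure Y)
    (hs : s ∈ Y) (hlt : cs.length v < cs.length (v * s)) (h : u * b = x * (v * s)) :
    b * s * b⁻¹ ∈ X ∧ u * (b * s * b⁻¹) * b = x * v := by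
  have hrefl := isReflection_of_mem_range_simple (hY hs)
  have hub : u * b * s = x * v := by rw [h, mul_assoc, mul_assoc, hrefl.mul_self, mul_one]
  have hinv : cs.IsRightInversion (u * b) s := by
    refine ⟨hrefl, ?_⟩
    rw [hub, h, hx.length_mul hY hv, hx.length_mul hY (mul_mem hv (subset_closure hs))]
    omega
  refine ⟨hb.conj_mem_of_isRightInversion hX hY hu hs hinv, ?_⟩
  rw [← hub]
  group

theorem IsMinDoubleCosetRep.exists_eq_mul (hX : X ⊆ Set.range cs.simple)
    (hY : Y ⊆ Set.range cs.simple) {b x u v : W}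
    (hb : IsMinDoubleCosetRep cs (closure X) (closure Y) b)
    (hx : IsMinLeftCosetRep cs (closure Y) x) (hu : u ∈ closure X) (hv : v ∈ closure Y)
    (h : u * b = x * v) : ∃ u' ∈ closure X, x = u' * b := by
  induction hv using parabolic_induction hY generalizing u with
  | one => exact ⟨u, hu, by rw [h, mul_one]⟩
  | mul_right v hv s hs hlt ih =>
    obtain ⟨hconj, hmul⟩ := hb.conj_mem_and_mul_eq hX hY hx hu hv hs hlt h
    exact ih (mul_mem hu (subset_closure hconj)) hmul

theorem IsMinDoubleCosetRep.mul_mul_eq_of_length_le (hX : X ⊆ Set.range cs.simple)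
    (hY : Y ⊆ Set.range cs.simple) {b u v : W}
    (hb : IsMinDoubleCosetRep cs (closure X) (closure Y) b) (hu : u ∈ closure X)
    (hv : v ∈ closure Y) (hlen : cs.length (u * b * v) ≤ cs.length b) : u * b * v = b := by
  have hmin : IsMinLeftCosetRep cs (closure Y) (u * b * v) := fun k hk =>
    hlen.trans (by simpa only [mul_assoc] using hb u hu (v * k) (mul_mem hv hk))
  obtain ⟨u', hu', h⟩ :=
    hb.exists_eq_mul hX hY hmin hu (inv_mem hv) (mul_inv_cancel_right (u * b) v).symm
  rw [h, hb.length_mul_left hX hu'] at hlen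
  have hu'1 : u' = 1 := cs.length_eq_zero_iff.1 (by omega)
  rw [h, hu'1, one_mul]

theorem IsMinDoubleCosetRep.mem_closure_inter_conj (hX : X ⊆ Set.range cs.simple)
    (hY : Y ⊆ Set.range cs.simple) {b h k : W}
    (hb : IsMinDoubleCosetRep cs (closure X) (closure Y) b) (hh : h ∈ closure X)
    (hk : k ∈ closure Y) (hhk : h * b = b * k) :
    h ∈ closure (X ∩ (fun s => b * s * b⁻¹) '' Y) := by
  induction hk using parabolic_induction hY generalizing h with
  | one => simp_all
  | mul_right k hk s hs hlt ih =>
    obtain ⟨hconj, hmul⟩ :=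
      hb.conj_mem_and_mul_eq hX hY hb.isMinLeftCosetRep hh hk hs hlt hhk
    have hconj' : b * s * b⁻¹ ∈ X ∩ (fun s => b * s * b⁻¹) '' Y := ⟨hconj, s, hs, rfl⟩
    exact (mul_mem_cancel_right (subset_closure hconj')).1
      (ih (mul_mem hh (subset_closure hconj)) hmul)

theorem conj_mem_closure_of_mem_closure_inter_conj {G : Type*} [Group G] {X Y : Set G} {b h : G}
    (hh : h ∈ closure (X ∩ (fun s => b * s * b⁻¹) '' Y)) : b⁻¹ * h * b ∈ closure Y := by
  have hle : closure (X ∩ (fun s => b * s * b⁻¹) '' Y) ≤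
      (closure Y).comap (MulAut.conj b⁻¹).toMonoidHom := by
    rw [closure_le]
    rintro _ ⟨-, s, hs, rfl⟩
    simpa [mul_assoc] using subset_closure hs
  simpa using hle hh

theorem IsMinDoubleCosetRep.isMinLeftCosetRep_inter_conj (hX : X ⊆ Set.range cs.simple)
    {b u : W} (hb : IsMinDoubleCosetRep cs (closure X) (closure Y) b) (hu : u ∈ closure X)
    (hub : IsMinLeftCosetRep cs (closure Y) (u * b)) :
    IsMinLeftCosetRep cs (closure (X ∩ (fun s => b * s * b⁻¹) '' Y)) u := by
  intro h hh
  have hle := hub _ (conj_mem_closure_of_mem_closure_inter_conj hh)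
  have huh : u * h ∈ closure X := mul_mem hu (closure_mono Set.inter_subset_left hh)
  rw [show u * b * (b⁻¹ * h * b) = u * h * b by group, hb.length_mul_left hX huh,
    hb.length_mul_left hX hu] at hle
  omega

theorem IsMinDoubleCosetRep.mul_longest_eq (hX : X ⊆ Set.range cs.simple)
    (hY : Y ⊆ Set.range cs.simple) {b u k w w' : W}
    (hb : IsMinDoubleCosetRep cs (closure X) (closure Y) b) (hu : u ∈ closure X)
    (hub : IsMinLeftCosetRep cs (closure Y) (u * b)) (hw : IsLongestIn cs (closure X) w)
    (hw' : IsLongestIn cs (closure (X ∩ (fun s => b * s * b⁻¹) '' Y)) w')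
    (hk : k ∈ closure Y) (hwub : w⁻¹ * u * b = b * k) : u * w' = w := by
  have hHX : X ∩ (fun s => b * s * b⁻¹) '' Y ⊆ X := Set.inter_subset_left
  have hmem := hb.mem_closure_inter_conj hX hY (mul_mem (inv_mem hw.1) hu) hk hwub
  have hmem' : u⁻¹ * w ∈ closure (X ∩ (fun s => b * s * b⁻¹) '' Y) := by
    simpa using inv_mem hmem
  have hmin := hb.isMinLeftCosetRep_inter_conj hX hu hub
  have hlen := hmin.length_mul (hHX.trans hX) hmem'
  have hlen' := hmin.length_mul (hHX.trans hX) hw'.1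
  have hle := hw.2 _ (mul_mem hu (closure_mono hHX hw'.1))
  rw [mul_inv_cancel_left] at hlen
  have hlongest : IsLongestIn cs (closure (X ∩ (fun s => b * s * b⁻¹) '' Y)) (u⁻¹ * w) :=
    ⟨hmem', fun v hv => (hw'.2 v hv).trans (by omega)⟩
  rw [hw'.eq (hHX.trans hX) hlongest, mul_inv_cancel_left]

end Parabolic

section LinearAlgebra

open Module Submodule

variable {k V : Type*}

theorem eigenspace_neg_neg [CommRing k] [AddCommGroup V] [Module k V] (f : End k V) (μ : k) :
    End.eigenspace (-f) (-μ) = End.eigenspace f μ := by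
  ext v
  simp

theorem eigenspace_conj [CommRing k] [AddCommGroup V] [Module k V] (e : V ≃ₗ[k] V) (f : End k V)
    (μ : k) : End.eigenspace (e.conj f) μ = (End.eigenspace f μ).map (e : V →ₗ[k] V) := by
  ext v
  rw [mem_map_equiv, End.mem_eigenspace_iff, End.mem_eigenspace_iff, LinearEquiv.conj_apply_apply,
    ← e.eq_symm_apply, map_smul]

theorem finrank_eigenspace_eq_add_of_isCompl [Field k] [AddCommGroup V] [Module k V]
    [FiniteDimensional k V] {f : End k V} {μ : k} {p q : Submodule k V} (hqp : IsCompl q p)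
    (hq : q ≤ End.eigenspace f μ) {f' : End k p} (hf' : ∀ x, (f' x : V) = f x) :
    finrank k (End.eigenspace f μ) = finrank k (End.eigenspace f' μ) + finrank k q := by
  have hmap : (End.eigenspace f' μ).map p.subtype = p ⊓ End.eigenspace f μ := by
    ext v
    simp [Subtype.ext_iff, hf', and_comm]
  have hsup : q ⊔ p ⊓ End.eigenspace f μ = End.eigenspace f μ := by
    rw [← sup_inf_assoc_of_le p hq, hqp.sup_eq_top, top_inf_eq]
  have hinf : q ⊓ (p ⊓ End.eigenspace f μ) = ⊥ := by
    rw [← inf_assoc, hqp.inf_eq_bot, bot_inf_eq]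
  have hdim := finrank_sup_add_finrank_inf_eq q (p ⊓ End.eigenspace f μ)
  rw [hsup, hinf, finrank_bot, add_zero, ← hmap, finrank_map_subtype_eq] at hdim
  rw [hdim, add_comm]

end LinearAlgebra

section Representation

open Module Representation

variable {k G V : Type*} [CommRing k] [Group G] [AddCommGroup V] [Module k V]

theorem isCompl_invariants_coinvariantsKer [Fintype G] [Invertible (Fintype.card G : k)]
    (ρ : Representation k G V) :
    IsCompl ρ.invariants (Coinvariants.ker ρ) := by
  have hker : LinearMap.ker ρ.averageMap = Coinvariants.ker ρ := by
    refine le_antisymm (fun v hv => ?_) (Submodule.span_le.2 ?_)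
    · have hmk : Coinvariants.mk ρ (ρ.averageMap v) = Coinvariants.mk ρ v := by
        simp [GroupAlgebra.average, ← Nat.cast_smul_eq_nsmul k, smul_smul]
      rwa [LinearMap.mem_ker.1 hv, map_zero, eq_comm, Coinvariants.mk_eq_zero] at hmk
    · rintro _ ⟨⟨g, v⟩, rfl⟩
      rw [SetLike.mem_coe, LinearMap.mem_ker, map_sub, sub_eq_zero, averageMap,
        ← asAlgebraHom_single_one, ← End.mul_apply, ← map_mul, GroupAlgebra.mul_average_right]
  exact hker ▸ ρ.isProj_averageMap.isCompl

theorem apply_sub_mem_of_mem_closure (ρ : Representation k G V) {p : Submodule k V}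
    {X : Set G} (h : ∀ s ∈ X, ∀ v, ρ s v - v ∈ p) {g : G} (hg : g ∈ Subgroup.closure X) (v : V) :
    ρ g v - v ∈ p := by
  induction hg using Subgroup.closure_induction generalizing v with
  | mem s hs => exact h s hs v
  | one => simp
  | mul x y _ _ hx hy => simpa using add_mem (hx (ρ y v)) (hy v)
  | inv x _ hx => simpa using neg_mem (hx (ρ x⁻¹ v))

theorem coinvariantsKer_subgroupClosure (ρ : Representation k G V) (X : Set G) :
    Coinvariants.ker (ρ.comp (Subgroup.closure X).subtype) =
      Submodule.span k {x | ∃ s ∈ X, ∃ v, ρ s v - v = x} := by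
  refine le_antisymm (Submodule.span_le.2 ?_) (Submodule.span_le.2 ?_)
  · rintro _ ⟨⟨g, v⟩, rfl⟩
    refine apply_sub_mem_of_mem_closure ρ (fun s hs v => ?_) g.2 v
    exact Submodule.subset_span ⟨s, hs, v, rfl⟩
  · rintro _ ⟨s, hs, v, rfl⟩
    exact Coinvariants.sub_mem_ker (ρ := ρ.comp (Subgroup.closure X).subtype)
      ⟨s, Subgroup.subset_closure hs⟩ v

theorem finrank_eigenspace_conj (ρ : Representation k G V) (x g : G) (μ : k) :
    finrank k (End.eigenspace (ρ (x * g * x⁻¹)) μ) =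
      finrank k (End.eigenspace (ρ g) μ) := by
  have hconj : ρ (x * g * x⁻¹) =
      (LinearMap.GeneralLinearGroup.toLinearEquiv (ρ.asGroupHom x)).conj (ρ g) := by
    rw [map_mul, map_mul]
    rfl
  rw [hconj, eigenspace_conj, LinearEquiv.finrank_map_eq]

end Representation

namespace AffineData

variable {cs : CoxeterSystem M W} (D : AffineData cs)

section Star

open Subgroup

theorem Jset_subset_range_simple : D.Jset ⊆ Set.range cs.simple :=
  Set.sdiff_subset

theorem isLongestIn_wJ : IsLongestIn cs D.WJ D.wJ :=
  ⟨D.hwJ_mem, D.hwJ_max⟩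

theorem wJ_inv : D.wJ⁻¹ = D.wJ :=
  D.isLongestIn_wJ.inv.eq D.Jset_subset_range_simple D.isLongestIn_wJ

theorem length_st_le (w : W) : cs.length (D.st w) ≤ cs.length w := by
  obtain ⟨ω, hω, rfl⟩ := cs.exists_isReduced w
  rw [hω.eq]
  clear hω
  induction ω with
  | nil => simp
  | cons i ω ih =>
    obtain ⟨j, hj⟩ := D.hst_S _ ⟨i, rfl⟩
    have hle := cs.length_mul_le (cs.simple j) (D.st (cs.wordProd ω))
    rw [cs.length_simple] at hle
    rw [cs.wordProd_cons, map_mul, ← hj, List.length_cons]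
    omega

theorem length_st (w : W) : cs.length (D.st w) = cs.length w :=
  (D.length_st_le w).antisymm (by simpa only [D.hst_inv] using D.length_st_le (D.st w))

theorem st_mem_WJ {u : W} (hu : u ∈ D.WJ) : D.st u ∈ D.WJ := by
  rw [D.hst_J u hu]
  exact mul_mem (mul_mem D.hwJ_mem hu) D.hwJ_mem

theorem st_of_mem_Lam {l : W} (hl : l ∈ D.Lam) : D.st l = D.wJ * l⁻¹ * D.wJ := by
  rw [D.hst_Lam l hl, mul_inv_rev, mul_inv_rev, inv_inv, D.wJ_inv, mul_assoc]

theorem closure_Hset (b : W) : closure (D.Hset b) = (D.WHstar b).map D.st.toMonoidHom := by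
  rw [WHstar, Hstar, MonoidHom.map_closure]
  simp [Set.image_image, D.hst_inv]

theorem WHstar_le_WJ (b : W) : D.WHstar b ≤ D.WJ := by
  rw [WHstar, closure_le]
  rintro _ ⟨s, hs, rfl⟩
  exact D.st_mem_WJ (subset_closure hs.1)

theorem finite_WHstar (b : W) : Finite (D.WHstar b) :=
  D.hWJ_fin.subset (D.WHstar_le_WJ b)

end Star

section TranslationLattice

open Module Representation

theorem rho_iota (w : W) (l : D.Lam) :
    D.rho w (D.iota l) = D.iota ⟨w * (l : W) * w⁻¹, D.hLam_normal.conj_mem _ l.2 w⟩ :=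
  D.hrho w l

theorem span_range_iota : Submodule.span ℚ (Set.range D.iota) = ⊤ := by
  rw [eq_top_iff, ← (Pi.basisFun ℚ (Fin D.rank)).span_eq, Submodule.span_le]
  rintro _ ⟨i, rfl⟩
  refine Submodule.subset_span ⟨D.freeIso.symm (Multiplicative.ofAdd (Pi.single i 1)), ?_⟩
  ext j
  rcases eq_or_ne j i with rfl | hij
  · simp [iota]
  · simp [iota, hij]

theorem rho_of_mem_Lam {l : W} (hl : l ∈ D.Lam) : D.rho l = LinearMap.id := by
  refine LinearMap.ext_on_range D.span_range_iota fun k => ?_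
  rw [rho_iota, LinearMap.id_apply]
  congr 1
  exact Subtype.ext (mul_inv_eq_of_eq_mul (D.hLam_comm l hl k k.2))

/-- The conjugation action of `W` on `Λ_ℚ`, as a representation. -/
def conjRep : Representation ℚ W (Fin D.rank → ℚ) where
  toFun := D.rho
  map_one' := D.rho_of_mem_Lam (one_mem _)
  map_mul' x y := by
    refine LinearMap.ext_on_range D.span_range_iota fun l => ?_
    simp only [rho_iota, End.mul_apply, mul_inv_rev, mul_assoc]

theorem conjRep_mul_of_mem_Lam {l : W} (hl : l ∈ D.Lam) (x : W) :
    D.conjRep (l * x) = D.conjRep x := by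
  rw [map_mul, show D.conjRep l = 1 from D.rho_of_mem_Lam hl, one_mul]

theorem Rprime_eq_coinvariantsKer (b : W) :
    D.Rprime b = Coinvariants.ker (D.conjRep.comp (D.WHstar b).subtype) := by
  rw [WHstar, coinvariantsKer_subgroupClosure]
  refine le_antisymm (Submodule.span_le.2 ?_) (Submodule.span_le.2 ?_)
  · rintro _ ⟨l, s, hs, rfl⟩
    rw [SetLike.mem_coe, ← neg_mem_iff, neg_sub, ← rho_iota]
    exact Submodule.subset_span ⟨s, hs, D.iota l, rfl⟩
  · rintro _ ⟨s, hs, v, rfl⟩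
    have hle : ⊤ ≤ (D.Rprime b).comap (D.conjRep s - 1) := by
      rw [← span_range_iota, Submodule.span_le]
      rintro _ ⟨l, rfl⟩
      rw [SetLike.mem_coe, Submodule.mem_comap, ← neg_mem_iff]
      refine Submodule.subset_span ⟨l, s, hs, ?_⟩
      rw [← rho_iota]
      exact neg_sub _ _
    exact hle Submodule.mem_top

/-- The dimension of the space of vectors of `Λ_ℚ` fixed by conjugation by `w`; this is
`e` of the negative of that action. -/
def fixedFinrank (w : W) : ℕ :=
  finrank ℚ (End.eigenspace (D.conjRep w) 1)

theorem phi_eq_sub (w : W) :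
    D.phi w = (D.fixedFinrank (w * D.wJ) : ℤ) - D.fixedFinrank D.wJ := by
  have hpr : D.conjRep (w * D.wJ) = D.conjRep (D.pr w * D.wJ) := by
    rw [← D.conjRep_mul_of_mem_Lam (D.hpr w).2 (D.pr w * D.wJ), ← mul_assoc, inv_mul_cancel_right]
  rw [fixedFinrank, fixedFinrank, hpr, ← eigenspace_neg_neg, ← eigenspace_neg_neg (D.conjRep D.wJ),
    phi, Amap, Amap, one_mul]
  rfl

theorem fixedFinrank_eq_add_finrank_invariants {b g : W} {f : End ℚ (D.Rprime b)}
    (hf : ∀ x, (f x : Fin D.rank → ℚ) = D.rho g x) (hg : g ∈ D.WHstar b) :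
    D.fixedFinrank g =
      D.eNeg' (-f) + finrank ℚ (invariants (D.conjRep.comp (D.WHstar b).subtype)) := by
  have := D.finite_WHstar b
  have := Fintype.ofFinite (D.WHstar b)
  have := invertibleOfNonzero (NeZero.ne (Fintype.card (D.WHstar b) : ℚ))
  have hcompl := isCompl_invariants_coinvariantsKer (D.conjRep.comp (D.WHstar b).subtype)
  rw [← Rprime_eq_coinvariantsKer] at hcompl
  have hfixed : invariants (D.conjRep.comp (D.WHstar b).subtype) ≤
      End.eigenspace (D.conjRep g) 1 := fun v hv => by
    rw [End.mem_eigenspace_iff, one_smul]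
    exact hv ⟨g, hg⟩
  rw [eNeg', eigenspace_neg_neg]
  exact finrank_eigenspace_eq_add_of_isCompl hcompl hfixed hf

end TranslationLattice

section DoubleCoset

variable {D} {b mu wHs : W}

theorem IsDominant.isMinLeftCosetRep (hmu : D.IsDominant mu) :
    IsMinLeftCosetRep cs D.WJ mu := fun u hu => by
  have hadd := cs.length_mul_le (mu * u) (u⁻¹ * D.wJ)
  rw [mul_assoc, mul_inv_cancel_left, hmu.2] at hadd
  have hle := D.hwJ_max _ (mul_mem (inv_mem hu) D.hwJ_mem)
  omega

theorem isMinDoubleCosetRep_of_mem_DCoset (hb_mem : b ∈ D.DCoset mu)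
    (hb_min : ∀ y ∈ D.DCoset mu, cs.length b ≤ cs.length y) :
    IsMinDoubleCosetRep cs D.WJ D.WJ b := by
  obtain ⟨p, hp, q, hq, rfl⟩ := hb_mem
  exact fun u hu v hv =>
    hb_min _ ⟨u * p, mul_mem hu hp, q * v, mul_mem hq hv, by simp only [mul_assoc]⟩

theorem st_eq_inv (hmu : mu ∈ D.Lam) (hb : IsMinDoubleCosetRep cs D.WJ D.WJ b)
    (hb_mem : b ∈ D.DCoset mu) : D.st b = b⁻¹ := by
  obtain ⟨p, hp, q, hq, hpq⟩ := hb_mem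
  have hu : (D.st q)⁻¹ * D.wJ * p⁻¹ ∈ D.WJ :=
    mul_mem (mul_mem (inv_mem (D.st_mem_WJ hq)) D.hwJ_mem) (inv_mem hp)
  have hv : q⁻¹ * D.wJ * (D.st p)⁻¹ ∈ D.WJ :=
    mul_mem (mul_mem (inv_mem hq) D.hwJ_mem) (inv_mem (D.st_mem_WJ hp))
  have hst : (D.st q)⁻¹ * D.wJ * p⁻¹ * b * (q⁻¹ * D.wJ * (D.st p)⁻¹) = (D.st b)⁻¹ := by
    rw [hpq, map_mul, map_mul, D.st_of_mem_Lam hmu]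
    simp only [mul_inv_rev, inv_inv, D.wJ_inv]
    group
  have hlen : cs.length (D.st b)⁻¹ ≤ cs.length b := by rw [cs.length_inv, D.length_st]
  have heq := hb.mul_mul_eq_of_length_le D.Jset_subset_range_simple D.Jset_subset_range_simple
    hu hv (hst ▸ hlen)
  rw [← inv_inj, inv_inv, ← hst, heq]

theorem IsDominant.exists_eq_mul (hmu : D.IsDominant mu)
    (hb : IsMinDoubleCosetRep cs D.WJ D.WJ b) (hb_mem : b ∈ D.DCoset mu) :
    ∃ u ∈ D.WJ, mu = u * b := by
  obtain ⟨p, hp, q, hq, hpq⟩ := hb_mem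
  refine hb.exists_eq_mul D.Jset_subset_range_simple D.Jset_subset_range_simple
    hmu.isMinLeftCosetRep (inv_mem hp) hq ?_
  rw [hpq]
  group

theorem IsDominant.eq_wJ_mul_mul (hmu : D.IsDominant mu)
    (hb : IsMinDoubleCosetRep cs D.WJ D.WJ b) (hb_mem : b ∈ D.DCoset mu)
    (hwHs : IsLongestIn cs (D.WHstar b) wHs) : b = D.wJ * wHs * mu := by
  obtain ⟨u, hu, hub⟩ := hmu.exists_eq_mul hb hb_mem
  have hstar : D.wJ * u * D.wJ * b⁻¹ = D.wJ * (u * b)⁻¹ * D.wJ := by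
    rw [← D.hst_J u hu, ← st_eq_inv hmu.1 hb hb_mem, ← map_mul, ← hub, D.st_of_mem_Lam hmu.1]
  have hconj : D.wJ⁻¹ * u * b = b * (D.wJ⁻¹ * u⁻¹) := by
    rw [← inv_inj] at hstar
    simp only [mul_inv_rev, inv_inv, ← mul_assoc] at hstar
    rw [← mul_assoc, mul_right_cancel hstar]
  have hlongest := hwHs.map D.length_st
  rw [← D.closure_Hset] at hlongest
  have htop := hb.mul_longest_eq D.Jset_subset_range_simple D.Jset_subset_range_simple hu
    (hub ▸ hmu.isMinLeftCosetRep) D.isLongestIn_wJ hlongest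
    (mul_mem (inv_mem D.hwJ_mem) (inv_mem hu)) hconj
  rw [D.hst_J _ (D.WHstar_le_WJ b hwHs.1)] at htop
  have huinv : D.wJ * wHs = u⁻¹ := by
    rw [← mul_assoc, mul_eq_right] at htop
    exact eq_inv_of_mul_eq_one_right htop
  rw [huinv, hub, inv_mul_cancel_left]

theorem fixedFinrank_mul_mul_wJ (hmu : mu ∈ D.Lam) (hb : b = D.wJ * wHs * mu) (y : W) :
    D.fixedFinrank (b * y * D.wJ) = D.fixedFinrank (y * wHs) := by
  have hconj : b * y * D.wJ⁻¹ = D.wJ * wHs * mu * (D.wJ * wHs)⁻¹ *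
      (D.wJ * wHs * (y * wHs) * (D.wJ * wHs)⁻¹) := by
    rw [hb]
    group
  rw [D.wJ_inv] at hconj
  rw [fixedFinrank, fixedFinrank, hconj,
    D.conjRep_mul_of_mem_Lam (D.hLam_normal.conj_mem mu hmu _), finrank_eigenspace_conj]

end DoubleCoset

theorem phiP_eq_sub {b wHs z : W} {rho' : W → (↥(D.Rprime b) →ₗ[ℚ] ↥(D.Rprime b))}
    (hrho' : ∀ u ∈ D.WHstar b, ∀ x : ↥(D.Rprime b),
      ((rho' u x : Fin D.rank → ℚ)) = D.rho u (x : Fin D.rank → ℚ))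
    (hwHs : wHs ∈ D.WHstar b) (hz : z ∈ D.WHstar b) :
    D.phiP rho' wHs z = (D.fixedFinrank (z * wHs) : ℤ) - D.fixedFinrank wHs := by
  rw [D.fixedFinrank_eq_add_finrank_invariants (hrho' _ (mul_mem hz hwHs)) (mul_mem hz hwHs),
    D.fixedFinrank_eq_add_finrank_invariants (hrho' _ hwHs) hwHs, phiP]
  push_cast
  ring

end AffineData

/-- For every `z ∈ W_{H*}` satisfying `b⁻¹ z* b = z⁻¹`, the element `bz`
lies in `I_*` and `φ(bz) = φ'(z) + φ(b)`. -/
theorem phi_b_mul (cs : CoxeterSystem M W) (D : AffineData cs)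
    (mu b wHs : W) (hmu : D.IsDominant mu)
    (hb_mem : b ∈ D.DCoset mu)
    (hb_min : ∀ y ∈ D.DCoset mu, cs.length b ≤ cs.length y)
    (hwHs_mem : wHs ∈ D.WHstar b)
    (hwHs_max : ∀ u ∈ D.WHstar b, cs.length u ≤ cs.length wHs)
    (rho' : W → (↥(D.Rprime b) →ₗ[ℚ] ↥(D.Rprime b)))
    (hrho' : ∀ u ∈ D.WHstar b, ∀ x : ↥(D.Rprime b),
      ((rho' u x : Fin D.rank → ℚ)) = D.rho u (x : Fin D.rank → ℚ))
    (z : W) (hz : z ∈ D.WHstar b) (hze : b⁻¹ * D.st z * b = z⁻¹) :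
    D.st (b * z) = (b * z)⁻¹ ∧ D.phi (b * z) = D.phiP rho' wHs z + D.phi b := by
  have hb := AffineData.isMinDoubleCosetRep_of_mem_DCoset hb_mem hb_min
  have hst : D.st b = b⁻¹ := AffineData.st_eq_inv hmu.1 hb hb_mem
  refine ⟨by rw [map_mul, hst, mul_inv_rev, ← hze, mul_inv_cancel_right], ?_⟩
  have hbmu : b = D.wJ * wHs * mu := hmu.eq_wJ_mul_mul hb hb_mem ⟨hwHs_mem, hwHs_max⟩
  have hfix : ∀ y, D.fixedFinrank (b * y * D.wJ) = D.fixedFinrank (y * wHs) :=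
    AffineData.fixedFinrank_mul_mul_wJ hmu.1 hbmu
  have hphi : D.phi b = (D.fixedFinrank wHs : ℤ) - D.fixedFinrank D.wJ := by
    simpa [D.phi_eq_sub] using hfix 1
  rw [hphi, D.phi_eq_sub, hfix, D.phiP_eq_sub hrho' hwHs_mem hz, sub_add_sub_cancel]

end LY
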